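/- Assume a11 < 1 and let θ > 0. Then the matrix M(θ) is convergent to zero if and only if h(θ) < 0. -/

import Mathlib

open Filter

/-- A square matrix with nonnegative real entries is *convergent to zero* if its powers
tend to the zero matrix. -/
def ConvergentToZero {n : ℕ} (M : Matrix (Fin n) (Fin n) ℝ) : Prop :=
  Tendsto (fun k : ℕ => M ^ k) atTop (nhds 0)

/-- The matrix `M(θ)`: for `θ > 0` its rows are `(a11, a12 (e^{θT}-1)/θ)` and
`(a21, a22 (1-e^{-θT})/θ)`, while `M(0)` has rows `(a11, a12 T)` and `(a21, a22 T)`. -/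
noncomputable def Mmat (T a11 a12 a21 a22 θ : ℝ) : Matrix (Fin 2) (Fin 2) ℝ :=
  if θ = 0 then !![a11, a12 * T; a21, a22 * T]
  else !![a11, a12 * ((Real.exp (θ * T) - 1) / θ);
          a21, a22 * ((1 - Real.exp (-θ * T)) / θ)]

/-- The function `h(θ) = tr M(θ) - 1 - det M(θ)`. -/
noncomputable def hfun (T a11 a12 a21 a22 θ : ℝ) : ℝ :=
  if θ = 0 then -(1 - a11) * (1 - a22 * T) + a12 * a21 * T
  else a11 + a22 * ((1 - Real.exp (-θ * T)) / θ) - 1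
    - a11 * a22 * ((1 - Real.exp (-θ * T)) / θ)
    + a12 * a21 * ((Real.exp (θ * T) - 1) / θ)

/-!
Write `M = !![a, b; c, d]`, so that `h = tr M - 1 - det M = -det (1 - M)`. The second column
`v = (b, 1 - a)` of the adjugate of `1 - M` satisfies `M v = v + (0, h)`. If `h ≥ 0`, the
nonnegative matrix `M` does not decrease `v`, hence neither do its powers, which therefore cannot
tend to zero when `a < 1`. If `h < 0`, adding a small `ε` to the first coordinate of `v` makes it a
positive vector that `M` strictly decreases in every coordinate; `M` then contracts it by a factor
`r < 1`, and this bounds every entry of `M ^ k` by a multiple of `r ^ k`.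
-/

open scoped Matrix Topology

section OrderedSemiring

variable {m n R : Type*} [Fintype n] [PartialOrder R]

theorem monotone_mulVec_of_nonneg [Semiring R] [IsOrderedRing R] {M : Matrix m n R}
    (hM : ∀ i j, 0 ≤ M i j) : Monotone (M *ᵥ ·) := fun _ _ hvw i =>
  dotProduct_le_dotProduct_of_nonneg_left hvw (hM i)

theorem le_pow_mulVec_of_le_mulVec [DecidableEq n] [Semiring R] [IsOrderedRing R]
    {M : Matrix n n R} {v : n → R} (hM : ∀ i j, 0 ≤ M i j) (hv : v ≤ M *ᵥ v) (k : ℕ) :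
    v ≤ M ^ k *ᵥ v := by
  induction k with
  | zero => simp
  | succ k ih =>
    calc v ≤ M *ᵥ v := hv
      _ ≤ M *ᵥ (M ^ k *ᵥ v) := monotone_mulVec_of_nonneg hM ih
      _ = M ^ (k + 1) *ᵥ v := by rw [Matrix.mulVec_mulVec, pow_succ']

theorem pow_mulVec_le_pow_smul [DecidableEq n] [CommSemiring R] [IsOrderedRing R]
    {M : Matrix n n R} {v : n → R} {r : R} (hM : ∀ i j, 0 ≤ M i j) (hr : 0 ≤ r)
    (hv : M *ᵥ v ≤ r • v) (k : ℕ) : M ^ k *ᵥ v ≤ r ^ k • v := by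
  induction k with
  | zero => simp
  | succ k ih =>
    calc M ^ (k + 1) *ᵥ v = M *ᵥ (M ^ k *ᵥ v) := by rw [Matrix.mulVec_mulVec, pow_succ']
      _ ≤ M *ᵥ (r ^ k • v) := monotone_mulVec_of_nonneg hM ih
      _ = r ^ k • (M *ᵥ v) := Matrix.mulVec_smul M _ v
      _ ≤ r ^ k • (r • v) := fun i => mul_le_mul_of_nonneg_left (hv i) (pow_nonneg hr k)
      _ = r ^ (k + 1) • v := by rw [smul_smul, pow_succ]

theorem nonpos_of_le_mulVec_of_tendsto_pow [DecidableEq n] [Semiring R] [IsOrderedRing R]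
    [TopologicalSpace R] [IsTopologicalSemiring R] [OrderClosedTopology R]
    {M : Matrix n n R} {v : n → R} (hM : ∀ i j, 0 ≤ M i j)
    (hlim : Tendsto (fun k : ℕ => M ^ k) atTop (𝓝 0)) (hv : v ≤ M *ᵥ v) : v ≤ 0 := by
  have hlim_mulVec : Tendsto (fun k : ℕ => M ^ k *ᵥ v) atTop (𝓝 (0 *ᵥ v)) :=
    ((continuous_id.matrix_mulVec continuous_const).tendsto 0).comp hlim
  rw [Matrix.zero_mulVec] at hlim_mulVec
  exact ge_of_tendsto' hlim_mulVec (le_pow_mulVec_of_le_mulVec hM hv)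

end OrderedSemiring

section ArchimedeanField

variable {n 𝕜 : Type*} [Field 𝕜] [LinearOrder 𝕜] [IsStrictOrderedRing 𝕜]

theorem exists_lt_one_le_smul_of_forall_lt [Finite n] {v w : n → 𝕜} (hv : ∀ i, 0 < v i)
    (h : ∀ i, w i < v i) : ∃ r : 𝕜, 0 ≤ r ∧ r < 1 ∧ w ≤ r • v := by
  have hlt : ∀ x ∈ insert 0 (Set.range (w / v)), ∀ y ∈ ({1} : Set 𝕜), x < y := by
    rintro _ (rfl | ⟨i, rfl⟩) _ rfl
    exacts [zero_lt_one, (div_lt_one (hv i)).2 (h i)]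
  obtain ⟨r, hr, hr1⟩ :=
    Set.Finite.exists_between' ((Set.finite_range (w / v)).insert 0) (Set.finite_singleton 1) hlt
  exact ⟨r, (hr 0 (Set.mem_insert _ _)).le, hr1 1 rfl, fun i =>
    (div_le_iff₀ (hv i)).1 (hr _ (Set.mem_insert_of_mem 0 (Set.mem_range_self i))).le⟩

variable [Archimedean 𝕜] [TopologicalSpace 𝕜] [OrderTopology 𝕜] [Fintype n] [DecidableEq n]
  {M : Matrix n n 𝕜} {v : n → 𝕜}

theorem tendsto_pow_zero_of_mulVec_le_smul {r : 𝕜} (hM : ∀ i j, 0 ≤ M i j) (hv : ∀ i, 0 < v i)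
    (hr0 : 0 ≤ r) (hr1 : r < 1) (hMv : M *ᵥ v ≤ r • v) :
    Tendsto (fun k : ℕ => M ^ k) atTop (𝓝 0) := by
  have hpow : ∀ k i j, 0 ≤ (M ^ k) i j := fun k => Matrix.pow_apply_nonneg hM k
  have entry_le : ∀ i j k, (M ^ k) i j ≤ r ^ k * (v i / v j) := by
    intro i j k
    rw [← mul_div_assoc, le_div_iff₀ (hv j)]
    calc (M ^ k) i j * v j ≤ (M ^ k *ᵥ v) i :=
          Finset.single_le_sum (f := fun l => (M ^ k) i l * v l)
            (fun l _ => mul_nonneg (hpow k i l) (hv l).le) (Finset.mem_univ j)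
      _ ≤ r ^ k * v i := pow_mulVec_le_pow_smul hM hr0 hMv k i
  have bound_tendsto : ∀ i j, Tendsto (fun k : ℕ => r ^ k * (v i / v j)) atTop (𝓝 0) := by
    intro i j
    simpa only [zero_mul] using
      (tendsto_pow_atTop_nhds_zero_of_lt_one hr0 hr1).mul_const (v i / v j)
  exact tendsto_pi_nhds.2 fun i => tendsto_pi_nhds.2 fun j =>
    tendsto_of_tendsto_of_tendsto_of_le_of_le tendsto_const_nhds (bound_tendsto i j)
      (fun k => hpow k i j) (entry_le i j)

theorem tendsto_pow_zero_of_mulVec_lt (hM : ∀ i j, 0 ≤ M i j) (hv : ∀ i, 0 < v i)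
    (hMv : ∀ i, (M *ᵥ v) i < v i) : Tendsto (fun k : ℕ => M ^ k) atTop (𝓝 0) := by
  obtain ⟨r, hr0, hr1, hr⟩ := exists_lt_one_le_smul_of_forall_lt hv hMv
  exact tendsto_pow_zero_of_mulVec_le_smul hM hv hr0 hr1 hr

end ArchimedeanField

theorem ConvergentToZero.apply_self_lt_one {n : ℕ} {M : Matrix (Fin n) (Fin n) ℝ}
    (hconv : ConvergentToZero M) (hM : ∀ i j, 0 ≤ M i j) (i : Fin n) : M i i < 1 := by
  by_contra! hi
  have hle : Pi.single i 1 ≤ M *ᵥ Pi.single i 1 := by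
    rw [Matrix.mulVec_single_one]
    exact update_le_iff.2 ⟨hi, fun j _ => hM j i⟩
  have hnonpos := nonpos_of_le_mulVec_of_tendsto_pow hM hconv hle i
  rw [Pi.single_eq_same, Pi.zero_apply] at hnonpos
  exact one_pos.not_ge hnonpos

theorem mulVec_adjugate_col_add_fin_two {R : Type*} [CommRing R] (M : Matrix (Fin 2) (Fin 2) R)
    (ε : R) : M *ᵥ ![M 0 1 + ε, 1 - M 0 0] =
      ![M 0 1 + ε * M 0 0, 1 - M 0 0 + (M.trace - 1 - M.det) + ε * M 1 0] := by
  rw [Matrix.trace_fin_two, Matrix.det_fin_two]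
  refine funext (Fin.forall_fin_two.2 ⟨?_, ?_⟩) <;>
    simp only [Matrix.mulVec, dotProduct, Fin.sum_univ_two, Matrix.cons_val_zero,
      Matrix.cons_val_one] <;>
    ring

section FinTwo

variable {M : Matrix (Fin 2) (Fin 2) ℝ}

theorem ConvergentToZero.trace_sub_one_sub_det_neg (hconv : ConvergentToZero M)
    (hM : ∀ i j, 0 ≤ M i j) : M.trace - 1 - M.det < 0 := by
  by_contra! h
  have hle : ![M 0 1, 1 - M 0 0] ≤ M *ᵥ ![M 0 1, 1 - M 0 0] := by
    have hMv := mulVec_adjugate_col_add_fin_two M 0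
    simp only [add_zero, zero_mul] at hMv
    rw [hMv]
    simpa [Pi.le_def, Fin.forall_fin_two] using h
  have hnonpos : 1 - M 0 0 ≤ 0 := nonpos_of_le_mulVec_of_tendsto_pow hM hconv hle 1
  linarith [hconv.apply_self_lt_one hM 0]

theorem convergentToZero_of_trace_sub_one_sub_det_neg (hM : ∀ i j, 0 ≤ M i j) (h00 : M 0 0 < 1)
    (h : M.trace - 1 - M.det < 0) : ConvergentToZero M := by
  obtain ⟨ε, hε, hε0⟩ : ∃ ε, M.trace - 1 - M.det + ε * M 1 0 < 0 ∧ 0 < ε := by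
    have hcont : Continuous fun ε : ℝ => M.trace - 1 - M.det + ε * M 1 0 := by fun_prop
    have hnear : ∀ᶠ ε in 𝓝 (0 : ℝ), M.trace - 1 - M.det + ε * M 1 0 < 0 :=
      hcont.continuousAt.eventually_lt_const (by simpa only [zero_mul, add_zero] using h)
    exact ((eventually_nhdsWithin_of_eventually_nhds hnear).and self_mem_nhdsWithin).exists
      (f := 𝓝[>] 0)
  refine tendsto_pow_zero_of_mulVec_lt (v := ![M 0 1 + ε, 1 - M 0 0]) hM ?_ ?_
  · exact Fin.forall_fin_two.2 ⟨add_pos_of_nonneg_of_pos (hM 0 1) hε0, sub_pos.2 h00⟩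
  · rw [mulVec_adjugate_col_add_fin_two]
    refine Fin.forall_fin_two.2 ⟨?_, ?_⟩
    · exact add_lt_add_right (mul_lt_of_lt_one_right hε0 h00) (M 0 1)
    · change 1 - M 0 0 + (M.trace - 1 - M.det) + ε * M 1 0 < 1 - M 0 0
      linarith

theorem convergentToZero_fin_two_iff (hM : ∀ i j, 0 ≤ M i j) :
    ConvergentToZero M ↔ M 0 0 < 1 ∧ M.trace - 1 - M.det < 0 :=
  ⟨fun hconv => ⟨hconv.apply_self_lt_one hM 0, hconv.trace_sub_one_sub_det_neg hM⟩,
    fun h => convergentToZero_of_trace_sub_one_sub_det_neg hM h.1 h.2⟩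

end FinTwo

theorem exp_mul_sub_one_div_nonneg {T : ℝ} (hT : 0 ≤ T) (θ : ℝ) :
    0 ≤ (Real.exp (θ * T) - 1) / θ := by
  rcases le_total 0 θ with hθ | hθ
  · exact div_nonneg (sub_nonneg.2 (Real.one_le_exp (mul_nonneg hθ hT))) hθ
  · exact div_nonneg_of_nonpos
      (sub_nonpos.2 (Real.exp_le_one_iff.2 (mul_nonpos_of_nonpos_of_nonneg hθ hT))) hθ

theorem one_sub_exp_neg_mul_div_nonneg {T : ℝ} (hT : 0 ≤ T) (θ : ℝ) :
    0 ≤ (1 - Real.exp (-θ * T)) / θ := by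
  rw [← neg_div_neg_eq, neg_sub]
  exact exp_mul_sub_one_div_nonneg hT (-θ)

section Mmat

variable {T a11 a12 a21 a22 : ℝ}

theorem Mmat_nonneg (hT : 0 ≤ T) (h11 : 0 ≤ a11) (h12 : 0 ≤ a12) (h21 : 0 ≤ a21) (h22 : 0 ≤ a22)
    (θ : ℝ) (i j : Fin 2) : 0 ≤ Mmat T a11 a12 a21 a22 θ i j := by
  have hexp := exp_mul_sub_one_div_nonneg hT θ
  have hexp_neg := one_sub_exp_neg_mul_div_nonneg hT θ
  unfold Mmat
  split_ifs
  · fin_cases i <;> fin_cases j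
    exacts [h11, mul_nonneg h12 hT, h21, mul_nonneg h22 hT]
  · fin_cases i <;> fin_cases j
    exacts [h11, mul_nonneg h12 hexp, h21, mul_nonneg h22 hexp_neg]

theorem Mmat_apply_zero_zero (T a11 a12 a21 a22 θ : ℝ) : Mmat T a11 a12 a21 a22 θ 0 0 = a11 := by
  unfold Mmat
  split_ifs <;> rfl

theorem hfun_eq_trace_sub_one_sub_det (T a11 a12 a21 a22 θ : ℝ) :
    hfun T a11 a12 a21 a22 θ =
      (Mmat T a11 a12 a21 a22 θ).trace - 1 - (Mmat T a11 a12 a21 a22 θ).det := by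
  unfold hfun Mmat
  split_ifs <;> rw [Matrix.trace_fin_two_of, Matrix.det_fin_two_of] <;> ring

theorem mmat_convergentToZero_iff_hfun_neg_general (hT : 0 ≤ T) (h11 : 0 ≤ a11) (h12 : 0 ≤ a12)
    (h21 : 0 ≤ a21) (h22 : 0 ≤ a22) (θ : ℝ) :
    ConvergentToZero (Mmat T a11 a12 a21 a22 θ) ↔ a11 < 1 ∧ hfun T a11 a12 a21 a22 θ < 0 := by
  rw [convergentToZero_fin_two_iff (Mmat_nonneg hT h11 h12 h21 h22 θ), Mmat_apply_zero_zero,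
    hfun_eq_trace_sub_one_sub_det]

end Mmat

/-- If `a11 < 1` and `θ > 0`, then `M(θ)` is convergent to zero if and only
if `h(θ) < 0`. -/
theorem mmat_convergentToZero_iff_hfun_neg (T a11 a12 a21 a22 θ : ℝ)
    (hT : 0 < T) (h11 : 0 ≤ a11) (h12 : 0 ≤ a12) (h21 : 0 ≤ a21) (h22 : 0 ≤ a22)
    (h11lt : a11 < 1) (hθ : 0 < θ) :
    ConvergentToZero (Mmat T a11 a12 a21 a22 θ) ↔ hfun T a11 a12 a21 a22 θ < 0 := by
  rw [mmat_convergentToZero_iff_hfun_neg_general hT.le h11 h12 h21 h22 θ, and_iff_right h11lt]
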